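/- Suppose a measurable function f on the ball B(z, 4R) ⊂ ℝ^d satisfies the Dini mean oscillation condition, and Φ : ℝ^d → ℝ^d is a diffeomorphism of class C¹ such that the partial derivatives ∂_{x_i}Φ^j are Hölder continuous and 2^{-1}‖x − y‖ ≤ ‖Φ(x) − Φ(y)‖ ≤ 2‖x − y‖ for all x, y ∈ ℝ^d. Then the function f ∘ Φ satisfies the Dini mean oscillation condition on the ball B(z', R), where z' = Φ^{-1}(z). -/

import Mathlib

open MeasureTheory Metric Set
noncomputable section

/-- Euclidean space ℝ^d. -/
abbrev E (d : ℕ) := EuclideanSpace ℝ (Fin d)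

/-- Partial derivative ∂_{x_i} φ. -/
def pd {d : ℕ} (i : Fin d) (φ : E d → ℝ) (x : E d) : ℝ :=
  fderiv ℝ φ x (EuclideanSpace.single i 1)

/-- Average of `f` over a set `s` (w.r.t. Lebesgue measure). -/
def setAvg {d : ℕ} (f : E d → ℝ) (s : Set (E d)) : ℝ :=
  (volume s).toReal⁻¹ * ∫ y in s, f y

/-- `f` satisfies the Dini mean oscillation condition on Ω: for some t₀ > 0 there is a
nonnegative function `w` with ∫₀^{t₀} w(r)/r dr < ∞ dominating the mean oscillations
of `f` over the sets Ω ∩ B(x,r). -/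
def DiniMeanOscillationOn {d : ℕ} (f : E d → ℝ) (Ω : Set (E d)) : Prop :=
  ∃ t₀ > (0 : ℝ), ∃ w : ℝ → ℝ, (∀ r, 0 ≤ w r) ∧
    IntegrableOn (fun r => w r / r) (Ioc (0 : ℝ) t₀) ∧
    ∀ r ∈ Ioc (0 : ℝ) t₀, ∀ x ∈ Ω,
      setAvg (fun y => |f y - setAvg f (Ω ∩ ball x r)|) (Ω ∩ ball x r) ≤ w r

/-!
Comparing `f ∘ Φ` on `D = Ω' ∩ ball x r` with `f` on a ball around `Φ x` containing `Φ '' D` fails: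
`f` need not be integrable on that ball, and then the mean oscillation bound says nothing, because
the integrals in it take the junk value `0`. Only balls inside `Φ '' D` are safe, and there `f` is
integrable as soon as `f ∘ Φ` is integrable on `D`.

So let `D` be convex, with `ball 0 ρ ⊆ D ⊆ ball 0 R`. A point at depth `θ ^ n`, measured by the
gauge of `D`, carries a ball of radius comparable to `θ ^ n * r` that `Φ` maps well inside
`Φ '' D`. As `w` is not monotone, the comparison radius in `f` is chosen in an interval of length
comparable to `θ ^ n * r` so that `w` there is at most its average. Chaining such balls to the
centre bounds the deviation at depth `θ ^ n` from a single constant by a sum of `n + O(1)` such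
averages, and by Bernoulli's inequality the points of `D` at depth about `θ ^ n` fill a fraction
`O(θ ^ n)` of `D`. Summation over `n` bounds the mean oscillation of `f ∘ Φ` on `D` by a multiple of
`r⁻¹ * ∫ σ in 0..r, w σ`, and by Tonelli this new modulus is Dini, since the integral of `r⁻²` over
`r ≥ σ` is `σ⁻¹`.
-/

open scoped ENNReal NNReal Pointwise
open Module (finrank)

section MeanOscillation

variable {α β : Type*} [MeasurableSpace α] [MeasurableSpace β] {μ : Measure α} {ν : Measure β}

/-- The mean oscillation of `g` over `s` is at most `a`. The deviation is measured from the best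
constant instead of the mean, which costs a factor `2` at most, and the normalization `(μ s)⁻¹` is
moved to the right-hand side. -/
def MeanOscillationLE (μ : Measure α) (g : α → ℝ) (s : Set α) (a : ℝ≥0∞) : Prop :=
  ∃ c : ℝ, ∫⁻ u in s, ‖g u - c‖ₑ ∂μ ≤ a * μ s

theorem MeanOscillationLE.mono {g : α → ℝ} {s : Set α} {a b : ℝ≥0∞}
    (h : MeanOscillationLE μ g s a) (hab : a ≤ b) : MeanOscillationLE μ g s b :=
  h.imp fun _ hc => hc.trans (by gcongr)

theorem meanOscillationLE_comp_preimage_iff {T : α → β} (hT : MeasurePreserving T μ ν)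
    (hTe : MeasurableEmbedding T) {g : β → ℝ} {s : Set β} {a : ℝ≥0∞} :
    MeanOscillationLE μ (g ∘ T) (T ⁻¹' s) a ↔ MeanOscillationLE ν g s a := by
  simp only [MeanOscillationLE, Function.comp_apply, hT.measure_preimage_emb hTe]
  exact exists_congr fun c => by
    rw [hT.setLIntegral_comp_preimage_emb hTe fun u => ‖g u - c‖ₑ]

theorem MeanOscillationLE.comp_of_map_le {Φ : α → β} (hΦ : Measurable Φ) {C A a : ℝ≥0∞}
    (hmap : μ.map Φ ≤ C • ν) {g : β → ℝ} (hg : Measurable g) {s : Set α} {t : Set β}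
    (ht : MeasurableSet t) (hst : MapsTo Φ s t) (hA : ν t ≤ A * μ s)
    (h : MeanOscillationLE ν g t a) : MeanOscillationLE μ (g ∘ Φ) s (C * A * a) := by
  obtain ⟨c, hc⟩ := h
  refine ⟨c, ?_⟩
  calc ∫⁻ u in s, ‖g (Φ u) - c‖ₑ ∂μ
      ≤ ∫⁻ u in Φ ⁻¹' t, ‖g (Φ u) - c‖ₑ ∂μ := lintegral_mono_set hst
    _ = ∫⁻ u in t, ‖g u - c‖ₑ ∂μ.map Φ :=
        (setLIntegral_map ht (hg.sub_const c).enorm hΦ).symm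
    _ ≤ ∫⁻ u in t, ‖g u - c‖ₑ ∂(C • ν) :=
        lintegral_mono' (Measure.restrict_mono subset_rfl hmap) le_rfl
    _ = C * ∫⁻ u in t, ‖g u - c‖ₑ ∂ν := by
        rw [Measure.restrict_smul, lintegral_smul_measure, smul_eq_mul]
    _ ≤ C * (a * (A * μ s)) := by gcongr; exact hc.trans (by gcongr)
    _ = C * A * a * μ s := by ring

theorem enorm_sub_le_of_setLIntegral_le {g : α → ℝ} (hg : Measurable g) {s t H : Set α}
    (hHs : H ⊆ s) (hHt : H ⊆ t) (hH : μ H ≠ 0) (hH' : μ H ≠ ∞) {b c : ℝ} {M v w : ℝ≥0∞}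
    (hs : μ s ≤ M * μ H) (ht : μ t ≤ M * μ H) (hb : ∫⁻ u in s, ‖g u - b‖ₑ ∂μ ≤ v * μ s)
    (hc : ∫⁻ u in t, ‖g u - c‖ₑ ∂μ ≤ w * μ t) : ‖b - c‖ₑ ≤ M * (v + w) := by
  rw [← ENNReal.mul_le_mul_iff_left hH hH']
  calc ‖b - c‖ₑ * μ H = ∫⁻ _ in H, ‖b - c‖ₑ ∂μ := by rw [setLIntegral_const]
    _ ≤ ∫⁻ u in H, (‖g u - c‖ₑ + ‖g u - b‖ₑ) ∂μ := by
        refine lintegral_mono fun u => ?_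
        rw [← sub_sub_sub_cancel_left c b (g u)]
        exact enorm_sub_le
    _ = ∫⁻ u in H, ‖g u - c‖ₑ ∂μ + ∫⁻ u in H, ‖g u - b‖ₑ ∂μ :=
        lintegral_add_left (hg.sub_const c).enorm _
    _ ≤ w * (M * μ H) + v * (M * μ H) := by
        gcongr
        · exact (lintegral_mono_set hHt).trans (hc.trans (by gcongr))
        · exact (lintegral_mono_set hHs).trans (hb.trans (by gcongr))
    _ = M * (v + w) * μ H := by ring

theorem setLIntegral_enorm_sub_le_add {g : α → ℝ} (hg : Measurable g) (s : Set α) (b c : ℝ) :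
    ∫⁻ u in s, ‖g u - b‖ₑ ∂μ ≤ ∫⁻ u in s, ‖g u - c‖ₑ ∂μ + ‖c - b‖ₑ * μ s := by
  rw [← setLIntegral_const, ← lintegral_add_left (hg.sub_const c).enorm]
  refine lintegral_mono fun u => ?_
  rw [← sub_add_sub_cancel (g u) c b]
  exact enorm_add_le _ _

end MeanOscillation

section SetAvg

variable {d : ℕ} {g : E d → ℝ} {s : Set (E d)}

theorem meanOscillationLE_of_setAvg_abs_sub_le (hg : IntegrableOn g s) (h0 : volume s ≠ 0)
    (htop : volume s ≠ ∞) {a : ℝ} (ha : setAvg (fun u => |g u - setAvg g s|) s ≤ a) :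
    MeanOscillationLE volume g s (ENNReal.ofReal a) := by
  have hpos : 0 < (volume s).toReal := ENNReal.toReal_pos h0 htop
  have hgm : IntegrableOn (fun u => g u - setAvg g s) s := hg.sub (integrableOn_const htop)
  refine ⟨setAvg g s, ?_⟩
  rw [← ofReal_integral_norm_eq_lintegral_enorm hgm,
    ← ENNReal.ofReal_toReal htop, ← ENNReal.ofReal_mul' hpos.le, mul_comm]
  exact ENNReal.ofReal_le_ofReal ((inv_mul_le_iff₀ hpos).1 ha)

theorem setAvg_sub_const (hg : IntegrableOn g s) (h0 : volume s ≠ 0) (htop : volume s ≠ ∞)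
    (c : ℝ) : setAvg (fun u => g u - c) s = setAvg g s - c := by
  rw [setAvg, integral_sub hg (integrableOn_const htop), setIntegral_const, mul_sub, smul_eq_mul,
    Measure.real, inv_mul_cancel_left₀ (ENNReal.toReal_pos h0 htop).ne', setAvg]

theorem setAvg_abs_sub_setAvg_le (hg : IntegrableOn g s) (h0 : volume s ≠ 0)
    (htop : volume s ≠ ∞) (c : ℝ) :
    setAvg (fun u => |g u - setAvg g s|) s ≤ 2 * setAvg (fun u => |g u - c|) s := by
  have hgc : IntegrableOn (fun u => g u - c) s := hg.sub (integrableOn_const htop)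
  have hgm : IntegrableOn (fun u => |g u - setAvg g s|) s := (hg.sub (integrableOn_const htop)).abs
  have hmean : |setAvg g s - c| ≤ setAvg (fun u => |g u - c|) s := by
    rw [← setAvg_sub_const hg h0 htop, setAvg, abs_mul, abs_of_nonneg (by positivity)]
    exact mul_le_mul_of_nonneg_left abs_integral_le_integral_abs (by positivity)
  have hpointwise : setAvg (fun u => |g u - setAvg g s| - |setAvg g s - c|) s ≤
      setAvg (fun u => |g u - c|) s := by
    refine mul_le_mul_of_nonneg_left (integral_mono (hgm.sub (integrableOn_const htop)) hgc.abs
      fun u => ?_) (by positivity)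
    rw [abs_sub_comm (setAvg g s) c]
    linarith [abs_sub_le (g u) c (setAvg g s)]
  rw [setAvg_sub_const hgm h0 htop] at hpointwise
  linarith

theorem MeanOscillationLE.setAvg_abs_sub_setAvg_le {a : ℝ≥0∞} (h : MeanOscillationLE volume g s a)
    (hg : IntegrableOn g s) (h0 : volume s ≠ 0) (htop : volume s ≠ ∞) (ha : a ≠ ∞) :
    setAvg (fun u => |g u - setAvg g s|) s ≤ (2 * a).toReal := by
  obtain ⟨c, hc⟩ := h
  have hgc : IntegrableOn (fun u => g u - c) s := hg.sub (integrableOn_const htop)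
  have hle : setAvg (fun u => |g u - c|) s ≤ a.toReal := by
    rw [setAvg, inv_mul_le_iff₀ (ENNReal.toReal_pos h0 htop), mul_comm, ← ENNReal.toReal_mul]
    exact (integral_norm_eq_lintegral_enorm hgc.aestronglyMeasurable).trans_le
      (ENNReal.toReal_mono (ENNReal.mul_ne_top ha htop) hc)
  rw [ENNReal.toReal_mul, ENNReal.toReal_ofNat]
  linarith [_root_.setAvg_abs_sub_setAvg_le hg h0 htop c]

theorem setAvg_abs_sub_setAvg_eq_zero_of_not_integrableOn
    (hgm : AEStronglyMeasurable g (volume.restrict s)) (hg : ¬ IntegrableOn g s) :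
    setAvg (fun u => |g u - setAvg g s|) s = 0 := by
  have hzero : setAvg g s = 0 := by rw [setAvg, integral_undef hg, mul_zero]
  have habs : ¬ IntegrableOn (fun u => |g u|) s := mt (integrable_norm_iff hgm).1 hg
  simp only [hzero, sub_zero]
  rw [setAvg, integral_undef habs, mul_zero]

end SetAvg

section Series

theorem tsum_pow_mul_sum_range_succ (r : ℝ≥0∞) (v : ℕ → ℝ≥0∞) :
    ∑' n, r ^ n * ∑ i ∈ Finset.range (n + 1), v i = (1 - r)⁻¹ * ∑' i, r ^ i * v i := by
  have hantidiagonal (n : ℕ) : r ^ n * ∑ i ∈ Finset.range (n + 1), v i =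
      ∑ p ∈ Finset.HasAntidiagonal.antidiagonal n, r ^ p.2 * (r ^ p.1 * v p.1) := by
    rw [Finset.Nat.sum_antidiagonal_eq_sum_range_succ fun i j => r ^ j * (r ^ i * v i),
      Finset.mul_sum]
    refine Finset.sum_congr rfl fun i hi => ?_
    rw [← mul_assoc, ← pow_add, Nat.sub_add_cancel (Finset.mem_range_succ_iff.1 hi)]
  calc ∑' n, r ^ n * ∑ i ∈ Finset.range (n + 1), v i
      = ∑' n, ∑' p : Finset.HasAntidiagonal.antidiagonal n, r ^ p.1.2 * (r ^ p.1.1 * v p.1.1) := by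
        refine tsum_congr fun n => ?_
        rw [hantidiagonal, tsum_fintype, Finset.sum_coe_sort _ fun p : ℕ × ℕ =>
          r ^ p.2 * (r ^ p.1 * v p.1)]
    _ = ∑' p : ℕ × ℕ, r ^ p.2 * (r ^ p.1 * v p.1) := by
        rw [← Finset.HasAntidiagonal.sigmaAntidiagonalEquivProd.tsum_eq, ENNReal.tsum_sigma']
        rfl
    _ = (1 - r)⁻¹ * ∑' i, r ^ i * v i := by
        rw [ENNReal.tsum_prod (f := fun i j => r ^ j * (r ^ i * v i))]
        simp only [ENNReal.tsum_mul_right, ENNReal.tsum_geometric, ENNReal.tsum_mul_left]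

theorem tsum_pow_mul_sum_range_add_three_le {r : ℝ≥0∞} (hr : 2⁻¹ ≤ r) (v : ℕ → ℝ≥0∞) :
    ∑' n, r ^ n * ∑ i ∈ Finset.range (n + 2 + 1), v i ≤
      4 * ((1 - r)⁻¹ * ∑' i, r ^ i * v i) := by
  have h2r : 1 ≤ 2 * r := by
    rw [← ENNReal.mul_inv_cancel two_ne_zero ENNReal.ofNat_ne_top]
    gcongr
  calc ∑' n, r ^ n * ∑ i ∈ Finset.range (n + 2 + 1), v i
      ≤ ∑' n, 4 * (r ^ (n + 2) * ∑ i ∈ Finset.range (n + 2 + 1), v i) := by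
        refine ENNReal.tsum_le_tsum fun n => ?_
        calc _ ≤ (2 * r) ^ 2 * (r ^ n * ∑ i ∈ Finset.range (n + 2 + 1), v i) :=
              le_mul_of_one_le_left' (one_le_pow₀ h2r)
          _ = 4 * (r ^ (n + 2) * ∑ i ∈ Finset.range (n + 2 + 1), v i) := by ring
    _ ≤ 4 * ∑' n, r ^ n * ∑ i ∈ Finset.range (n + 1), v i := by
        rw [ENNReal.tsum_mul_left]
        gcongr 4 * ?_
        exact ENNReal.tsum_comp_le_tsum_of_injective (add_left_injective 2)
          fun n => r ^ n * ∑ i ∈ Finset.range (n + 1), v i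
    _ = 4 * ((1 - r)⁻¹ * ∑' i, r ^ i * v i) := by rw [tsum_pow_mul_sum_range_succ]

end Series

theorem setLIntegral_mul_measure_ball_le {X : Type*} [PseudoMetricSpace X]
    [SecondCountableTopology X] [MeasurableSpace X] [OpensMeasurableSpace X] {μ : Measure X}
    [SFinite μ] {h : X → ℝ≥0∞} (hh : Measurable h) {S S' : Set X} (hS : MeasurableSet S) {s : ℝ}
    (hSS' : ∀ y ∈ S, ball y s ⊆ S') :
    ∫⁻ y in S, h y * μ (ball y s) ∂μ ≤ ∫⁻ p in S', ∫⁻ y in ball p s, h y ∂μ ∂μ := by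
  have hU : MeasurableSet {q : X × X | dist q.1 q.2 < s} :=
    measurableSet_lt (by fun_prop) measurable_const
  set F : X × X → ℝ≥0∞ := {q : X × X | dist q.1 q.2 < s}.indicator fun q => h q.1
  have hball (y p : X) : F (y, p) = (ball y s).indicator (fun _ => h y) p := by
    simp only [F, indicator, mem_ofPred_eq, mem_ball']
  have hball' (y p : X) : F (y, p) = (ball p s).indicator h y := by
    simp only [F, indicator, mem_ofPred_eq, mem_ball]
  calc ∫⁻ y in S, h y * μ (ball y s) ∂μ = ∫⁻ y in S, ∫⁻ p in S', F (y, p) ∂μ ∂μ := by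
        refine setLIntegral_congr_fun hS fun y hy => ?_
        simp only [hball]
        rw [lintegral_indicator measurableSet_ball, setLIntegral_const,
          Measure.restrict_apply measurableSet_ball, inter_eq_left.2 (hSS' y hy)]
    _ = ∫⁻ p in S', ∫⁻ y in S, F (y, p) ∂μ ∂μ :=
        lintegral_lintegral_swap ((hh.comp measurable_fst).indicator hU).aemeasurable
    _ ≤ ∫⁻ p in S', ∫⁻ y in ball p s, h y ∂μ ∂μ := by
        refine lintegral_mono fun p => ?_
        simp only [hball']
        rw [← lintegral_indicator measurableSet_ball]
        exact setLIntegral_le_lintegral _ _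

section Haar

variable {V : Type*} [NormedAddCommGroup V] [NormedSpace ℝ V] [FiniteDimensional ℝ V]
  [MeasurableSpace V] [BorelSpace V] {μ : Measure V} [μ.IsAddHaarMeasure]

theorem addHaar_ball_mul_eq (x y : V) {k : ℝ} (hk : 0 < k) (r : ℝ) :
    μ (ball x (k * r)) = ENNReal.ofReal k ^ finrank ℝ V * μ (ball y r) := by
  rw [μ.addHaar_ball_mul_of_pos x hk, ENNReal.ofReal_pow hk.le, ← μ.addHaar_ball_center y]

theorem addHaar_eq_smul_hausdorffMeasure (μ : Measure V) [μ.IsAddHaarMeasure] :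
    ∃ c : ℝ≥0, μ = c • μH[finrank ℝ V] :=
  ⟨_, Measure.isAddLeftInvariant_eq_smul μ _⟩

theorem addHaar_map_le_of_antilipschitzWith {Φ : V → V} {L : ℝ≥0} (hΦ : AntilipschitzWith L Φ)
    (hm : Measurable Φ) : μ.map Φ ≤ (L : ℝ≥0∞) ^ finrank ℝ V • μ := by
  obtain ⟨c, hc⟩ := addHaar_eq_smul_hausdorffMeasure μ
  refine Measure.le_iff.2 fun t ht => ?_
  have h := hΦ.hausdorffMeasure_preimage_le (Nat.cast_nonneg (finrank ℝ V)) t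
  rw [ENNReal.rpow_natCast] at h
  rw [Measure.map_apply hm ht, Measure.smul_apply, smul_eq_mul, hc, Measure.smul_apply,
    Measure.smul_apply, ENNReal.smul_def, ENNReal.smul_def, smul_eq_mul, smul_eq_mul,
    mul_left_comm]
  gcongr

theorem addHaar_le_map_of_lipschitzWith {Φ : V → V} {K : ℝ≥0} (hΦ : LipschitzWith K Φ)
    (hsurj : Function.Surjective Φ) : μ ≤ (K : ℝ≥0∞) ^ finrank ℝ V • μ.map Φ := by
  obtain ⟨c, hc⟩ := addHaar_eq_smul_hausdorffMeasure μ
  refine Measure.le_iff.2 fun t ht => ?_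
  have h := hΦ.hausdorffMeasure_image_le (Nat.cast_nonneg (finrank ℝ V)) (Φ ⁻¹' t)
  rw [ENNReal.rpow_natCast, image_preimage_eq t hsurj] at h
  rw [Measure.smul_apply, smul_eq_mul, Measure.map_apply hΦ.continuous.measurable ht, hc,
    Measure.smul_apply, Measure.smul_apply, ENNReal.smul_def, ENNReal.smul_def, smul_eq_mul,
    smul_eq_mul, mul_left_comm]
  gcongr

theorem integrableOn_of_integrableOn_comp {Φ : V → V} {K : ℝ≥0} (hΦ : LipschitzWith K Φ)
    (hsurj : Function.Surjective Φ) {f : V → ℝ} (hf : Measurable f) {t : Set V}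
    (ht : MeasurableSet t) (hint : IntegrableOn (f ∘ Φ) (Φ ⁻¹' t) μ) : IntegrableOn f t μ := by
  have hm := hΦ.continuous.measurable
  have hmap : IntegrableOn f t (μ.map Φ) := by
    rw [IntegrableOn, Measure.restrict_map hm ht]
    exact (integrable_map_measure hf.aestronglyMeasurable hm.aemeasurable).2 hint
  refine (hmap.smul_measure (c := (K : ℝ≥0∞) ^ finrank ℝ V) (by finiteness)).mono_measure ?_
  rw [← Measure.restrict_smul]
  exact Measure.restrict_mono subset_rfl (addHaar_le_map_of_lipschitzWith hΦ hsurj)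

theorem setLIntegral_le_of_ball_average_le {h : V → ℝ≥0∞} (hh : Measurable h) {S S' : Set V}
    (hS : MeasurableSet S) (hS' : MeasurableSet S') {s : ℝ} (hs : 0 < s)
    (hSS' : ∀ y ∈ S, ball y s ⊆ S') {a : ℝ≥0∞}
    (ha : ∀ p ∈ S', ∫⁻ y in ball p s, h y ∂μ ≤ a * μ (ball p s)) :
    ∫⁻ y in S, h y ∂μ ≤ a * μ S' := by
  have hb0 : μ (ball 0 s) ≠ 0 := (measure_ball_pos μ 0 hs).ne'
  have hb : μ (ball 0 s) ≠ ∞ := measure_ball_lt_top.ne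
  rw [← ENNReal.mul_le_mul_iff_left hb0 hb]
  calc (∫⁻ y in S, h y ∂μ) * μ (ball 0 s) = ∫⁻ y in S, h y * μ (ball y s) ∂μ := by
        simp only [μ.addHaar_ball_center, lintegral_mul_const _ hh]
    _ ≤ ∫⁻ p in S', ∫⁻ y in ball p s, h y ∂μ ∂μ := setLIntegral_mul_measure_ball_le hh hS hSS'
    _ ≤ ∫⁻ _ in S', a * μ (ball 0 s) ∂μ :=
        setLIntegral_mono' hS' fun p hp => (ha p hp).trans_eq (by rw [μ.addHaar_ball_center])
    _ = a * μ S' * μ (ball 0 s) := by rw [setLIntegral_const]; ring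

end Haar

section Gauge

variable {V : Type*} [NormedAddCommGroup V] [NormedSpace ℝ V] {D : Set V} {ρ R t t' : ℝ}

theorem gauge_le_gauge_add_dist_div (hD : Convex ℝ D) (hρ : 0 < ρ) (hin : ball 0 ρ ⊆ D)
    (u y : V) : gauge D u ≤ gauge D y + dist u y / ρ := by
  rw [div_eq_inv_mul]
  exact (hD.lipschitzWith_gauge (r := ⟨ρ, hρ.le⟩) hρ hin).le_add_mul u y

theorem ball_subset_of_gauge_le (hD : Convex ℝ D) (hρ : 0 < ρ) (hin : ball 0 ρ ⊆ D) {y : V}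
    (hy : gauge D y ≤ 1 - t) : ball y (t * ρ) ⊆ D := by
  intro u hu
  refine setOfPred_gauge_lt_one_subset_self hD (hin (mem_ball_self hρ))
    ((absorbent_ball_zero hρ).mono hin) ?_
  have hdist : dist u y / ρ < t := (div_lt_iff₀ hρ).2 hu
  exact (gauge_le_gauge_add_dist_div hD hρ hin u y).trans_lt (by linarith)

theorem norm_le_mul_gauge (hρ : 0 < ρ) (hin : ball 0 ρ ⊆ D) (hout : D ⊆ ball 0 R)
    (y : V) : ‖y‖ ≤ R * gauge D y :=
  have hR : 0 < R := pos_of_mem_ball (hout (hin (mem_ball_self hρ)))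
  (div_le_iff₀' hR).1 <| le_gauge_of_subset_closedBall ((absorbent_ball_zero hρ).mono hin) hR.le
    (hout.trans ball_subset_closedBall)

theorem exists_gauge_le_dist_le (hρ : 0 < ρ) (hin : ball 0 ρ ⊆ D) (hout : D ⊆ ball 0 R)
    (htt' : t' ≤ t) (ht : t ≤ 1) (ht' : t' < 1) {y : V}
    (hy : gauge D y ≤ 1 - t') : ∃ y', gauge D y' ≤ 1 - t ∧ dist y y' ≤ (t - t') * R := by
  have hR : 0 < R := pos_of_mem_ball (hout (hin (mem_ball_self hρ)))
  have hpos : 0 < 1 - t' := by linarith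
  set k := (1 - t) / (1 - t')
  have hk : k * (1 - t') = 1 - t := div_mul_cancel₀ _ hpos.ne'
  have hk0 : 0 ≤ k := div_nonneg (by linarith) hpos.le
  have hk1 : 0 ≤ 1 - k := sub_nonneg.2 ((div_le_one hpos).2 (by linarith))
  refine ⟨k • y, ?_, ?_⟩
  · rw [gauge_smul_of_nonneg hk0, smul_eq_mul, ← hk]
    exact mul_le_mul_of_nonneg_left hy hk0
  · calc dist y (k • y) = (1 - k) * ‖y‖ := by
          rw [dist_eq_norm, ← norm_smul_of_nonneg hk1, sub_smul, one_smul]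
      _ ≤ (1 - k) * (R * (1 - t')) :=
          mul_le_mul_of_nonneg_left ((norm_le_mul_gauge hρ hin hout y).trans (by gcongr)) hk1
      _ = (t - t') * R := by linear_combination -R * hk

theorem exists_pow_shell_of_gauge_lt_one {θ : ℝ} (hθ0 : 0 < θ) (hθ1 : θ < 1) {u : V}
    (hu : gauge D u < 1) :
    ∃ n : ℕ, 1 - θ ^ n ≤ gauge D u ∧ gauge D u ≤ 1 - θ ^ (n + 1) := by
  obtain ⟨n, hlt, hle⟩ := exists_nat_pow_near_of_lt_one (sub_pos.2 hu)
    (sub_le_self 1 (gauge_nonneg u)) hθ0 hθ1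
  exact ⟨n, by linarith, by linarith⟩

theorem addHaar_setOf_le_gauge_le [FiniteDimensional ℝ V] [MeasurableSpace V] [BorelSpace V]
    {μ : Measure V} [μ.IsAddHaarMeasure] (hDo : IsOpen D) (hD : Convex ℝ D) (h0 : (0 : V) ∈ D)
    (hfin : μ D ≠ ∞) (ht : 0 ≤ t) :
    μ {u ∈ D | 1 - t ≤ gauge D u} ≤ ENNReal.ofReal ((finrank ℝ V + 1) * t) * μ D := by
  obtain ht1 | ht1 := le_or_gt 1 t
  · calc μ {u ∈ D | 1 - t ≤ gauge D u} ≤ 1 * μ D := by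
          rw [one_mul]
          exact measure_mono (sep_subset _ _)
      _ ≤ ENNReal.ofReal ((finrank ℝ V + 1) * t) * μ D := by
          gcongr
          rw [ENNReal.one_le_ofReal]
          exact one_le_mul_of_one_le_of_one_le (by simp) ht1
  have hpos : 0 < 1 - t := by linarith
  have hsub : (1 - t) • D ⊆ D := by
    rintro _ ⟨w, hw, rfl⟩
    exact hD.smul_mem_of_zero_mem h0 hw ⟨hpos.le, by linarith⟩
  have hcollar : {u ∈ D | 1 - t ≤ gauge D u} ⊆ D \ (1 - t) • D := by
    rintro _ ⟨hu, hgauge⟩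
    refine ⟨hu, ?_⟩
    rintro ⟨w, hw, rfl⟩
    simp only [gauge_smul_of_nonneg hpos.le, smul_eq_mul] at hgauge
    nlinarith [gauge_lt_one_of_mem_of_isOpen hDo hw]
  have hbernoulli : 1 ≤ (finrank ℝ V + 1) * t + (1 - t) ^ finrank ℝ V := by
    have h := one_add_mul_le_pow (show (-2 : ℝ) ≤ -t by linarith) (finrank ℝ V)
    rw [← sub_eq_add_neg] at h
    linarith
  calc μ {u ∈ D | 1 - t ≤ gauge D u} ≤ μ (D \ (1 - t) • D) := measure_mono hcollar
    _ = μ D - ENNReal.ofReal ((1 - t) ^ finrank ℝ V) * μ D := by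
        rw [measure_sdiff hsub (hDo.smul₀ hpos.ne').nullMeasurableSet
          (measure_ne_top_of_subset hsub hfin), Measure.addHaar_smul, abs_of_pos (by positivity)]
    _ ≤ ENNReal.ofReal ((finrank ℝ V + 1) * t) * μ D := by
        rw [tsub_le_iff_right, ← add_mul, ← ENNReal.ofReal_add (by positivity) (by positivity)]
        exact le_mul_of_one_le_left' (ENNReal.one_le_ofReal.2 hbernoulli)

end Gauge

section ConvexOscillation

variable {V : Type*} [NormedAddCommGroup V] [NormedSpace ℝ V] [FiniteDimensional ℝ V]
  [MeasurableSpace V] [BorelSpace V] {μ : Measure V} [μ.IsAddHaarMeasure] {g : V → ℝ}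
  {D : Set V} {ρ R θ s : ℝ} {c : ℕ → V → ℝ} {v : ℕ → ℝ≥0∞}

theorem enorm_sub_le_of_dist_le_half (hg : Measurable g) {y y' : V} {r r' : ℝ} (hr : 0 < r)
    (hrr' : r / 2 ≤ r') (hr'r : r' ≤ r) (hyy' : dist y y' ≤ r / 2) {b b' : ℝ} {a a' : ℝ≥0∞}
    (hb : ∫⁻ u in ball y r', ‖g u - b‖ₑ ∂μ ≤ a * μ (ball y r'))
    (hb' : ∫⁻ u in ball y' r, ‖g u - b'‖ₑ ∂μ ≤ a' * μ (ball y' r)) :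
    ‖b - b'‖ₑ ≤ 2 ^ finrank ℝ V * (a + a') := by
  have hdouble (x : V) : μ (ball x r) = 2 ^ finrank ℝ V * μ (ball y (r / 2)) := by
    simpa [mul_div_cancel₀] using addHaar_ball_mul_eq (μ := μ) x y two_pos (r / 2)
  exact enorm_sub_le_of_setLIntegral_le hg (ball_subset_ball hrr')
    (ball_subset_ball' (by linarith)) (measure_ball_pos μ y (half_pos hr)).ne'
    measure_ball_lt_top.ne ((measure_mono (ball_subset_ball hr'r)).trans (hdouble y).le)
    (hdouble y').le hb hb'

theorem enorm_sub_center_add_le (hg : Measurable g) (hρ : 0 < ρ) (hin : ball 0 ρ ⊆ D)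
    (hout : D ⊆ ball 0 R) (hθ : 1 / 2 ≤ θ) (hθ1 : θ < 1) (hs : 0 < s) (hRs : 2 * (1 - θ) * R ≤ s)
    (hc : ∀ n y, gauge D y ≤ 1 - θ ^ n →
      ∫⁻ u in ball y (θ ^ n * s), ‖g u - c n y‖ₑ ∂μ ≤ v n * μ (ball y (θ ^ n * s)))
    (n : ℕ) (y : V) (hy : gauge D y ≤ 1 - θ ^ n) :
    ‖c n y - c 0 0‖ₑ + 2 ^ finrank ℝ V * v n ≤
      2 * 2 ^ finrank ℝ V * ∑ i ∈ Finset.range (n + 1), v i := by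
  -- The summand `2 ^ finrank ℝ V * v n` leaves room for the next link of the chain of balls.
  induction n generalizing y with
  | zero =>
    have hy0 : y = 0 := by
      rw [← norm_le_zero_iff]
      nlinarith [norm_le_mul_gauge hρ hin hout y,
        pos_of_mem_ball (hout (hin (mem_ball_self hρ)))]
    simp only [hy0, sub_self, enorm_zero, zero_add, Finset.sum_range_one]
    gcongr
    exact le_mul_of_one_le_left' one_le_two
  | succ n ih =>
    have hpos : 0 < θ ^ n := by positivity
    obtain ⟨y', hy', hdist⟩ := exists_gauge_le_dist_le hρ hin hout
      (pow_le_pow_of_le_one (by linarith) hθ1.le n.le_succ) (pow_le_one₀ (by linarith) hθ1.le)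
      (pow_lt_one₀ (by linarith) hθ1 n.succ_ne_zero) hy
    have hlink : ‖c (n + 1) y - c n y'‖ₑ ≤ 2 ^ finrank ℝ V * (v (n + 1) + v n) := by
      refine enorm_sub_le_of_dist_le_half hg (by positivity) ?_ ?_ (hdist.trans ?_)
        (hc (n + 1) y hy) (hc n y' hy')
      all_goals rw [pow_succ]; nlinarith [mul_pos hpos hs]
    calc ‖c (n + 1) y - c 0 0‖ₑ + 2 ^ finrank ℝ V * v (n + 1)
        ≤ 2 ^ finrank ℝ V * (v (n + 1) + v n) + ‖c n y' - c 0 0‖ₑ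
            + 2 ^ finrank ℝ V * v (n + 1) := by
          rw [← sub_add_sub_cancel (c (n + 1) y) (c n y')]
          gcongr
          exact (enorm_add_le _ _).trans (by gcongr)
      _ = (‖c n y' - c 0 0‖ₑ + 2 ^ finrank ℝ V * v n) + 2 * 2 ^ finrank ℝ V * v (n + 1) := by
          ring
      _ ≤ 2 * 2 ^ finrank ℝ V * ∑ i ∈ Finset.range (n + 1 + 1), v i := by
          rw [Finset.sum_range_succ _ (n + 1), mul_add]
          gcongr
          exact ih y' hy'

theorem setLIntegral_ball_enorm_sub_center_le (hg : Measurable g) (hρ : 0 < ρ)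
    (hin : ball 0 ρ ⊆ D) (hout : D ⊆ ball 0 R) (hθ : 1 / 2 ≤ θ) (hθ1 : θ < 1)
    (hs : 0 < s) (hRs : 2 * (1 - θ) * R ≤ s)
    (hc : ∀ n y, gauge D y ≤ 1 - θ ^ n →
      ∫⁻ u in ball y (θ ^ n * s), ‖g u - c n y‖ₑ ∂μ ≤ v n * μ (ball y (θ ^ n * s)))
    {n : ℕ} {p : V} (hp : gauge D p ≤ 1 - θ ^ n) :
    ∫⁻ u in ball p ((1 - θ) * (θ ^ n * s)), ‖g u - c 0 0‖ₑ ∂μ ≤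
      3 * (ENNReal.ofReal (1 - θ))⁻¹ ^ finrank ℝ V * (∑ i ∈ Finset.range (n + 1), v i) *
        μ (ball p ((1 - θ) * (θ ^ n * s))) := by
  have h1θ : 0 < 1 - θ := by linarith
  have hr : 0 < θ ^ n * s := by positivity
  set κ := (ENNReal.ofReal (1 - θ))⁻¹
  have hκ : 2 ≤ κ := by
    rw [ENNReal.le_inv_iff_le_inv, ← ENNReal.ofReal_ofNat 2, ← ENNReal.ofReal_inv_of_pos two_pos]
    exact ENNReal.ofReal_le_ofReal (by linarith)
  have hball : μ (ball p (θ ^ n * s)) =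
      κ ^ finrank ℝ V * μ (ball p ((1 - θ) * (θ ^ n * s))) := by
    rw [addHaar_ball_mul_eq p p h1θ, ← mul_assoc, ← mul_pow, ENNReal.inv_mul_cancel, one_pow,
      one_mul]
    · simpa using h1θ
    · exact ENNReal.ofReal_ne_top
  have hcenter : ‖c n p - c 0 0‖ₑ ≤ 2 * κ ^ finrank ℝ V * ∑ i ∈ Finset.range (n + 1), v i :=
    (le_self_add.trans (enorm_sub_center_add_le hg hρ hin hout hθ hθ1 hs hRs hc n p hp)).trans
      (by gcongr)
  calc ∫⁻ u in ball p ((1 - θ) * (θ ^ n * s)), ‖g u - c 0 0‖ₑ ∂μ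
      ≤ ∫⁻ u in ball p ((1 - θ) * (θ ^ n * s)), ‖g u - c n p‖ₑ ∂μ +
          ‖c n p - c 0 0‖ₑ * μ (ball p ((1 - θ) * (θ ^ n * s))) :=
        setLIntegral_enorm_sub_le_add hg _ _ _
    _ ≤ (∑ i ∈ Finset.range (n + 1), v i) * μ (ball p (θ ^ n * s)) +
          2 * κ ^ finrank ℝ V * (∑ i ∈ Finset.range (n + 1), v i) *
            μ (ball p ((1 - θ) * (θ ^ n * s))) := by
        gcongr
        refine (lintegral_mono_set (ball_subset_ball (by nlinarith))).trans
          ((hc n p hp).trans ?_)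
        gcongr
        exact Finset.single_le_sum (f := v) (fun _ _ => zero_le) (Finset.self_mem_range_succ n)
    _ = 3 * κ ^ finrank ℝ V * (∑ i ∈ Finset.range (n + 1), v i) *
          μ (ball p ((1 - θ) * (θ ^ n * s))) := by
        rw [hball]
        ring

theorem setLIntegral_shell_enorm_sub_center_le (hDo : IsOpen D) (hD : Convex ℝ D)
    (hg : Measurable g) (hρ : 0 < ρ) (hin : ball 0 ρ ⊆ D) (hout : D ⊆ ball 0 R)
    (hθ : 1 / 2 ≤ θ) (hθ1 : θ < 1) (hs : 0 < s) (hsρ : s ≤ ρ) (hRs : 2 * (1 - θ) * R ≤ s)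
    (hc : ∀ n y, gauge D y ≤ 1 - θ ^ n →
      ∫⁻ u in ball y (θ ^ n * s), ‖g u - c n y‖ₑ ∂μ ≤ v n * μ (ball y (θ ^ n * s))) (n : ℕ) :
    ∫⁻ u in {u | 1 - θ ^ n ≤ gauge D u ∧ gauge D u ≤ 1 - θ ^ (n + 1)}, ‖g u - c 0 0‖ₑ ∂μ ≤
      3 * (ENNReal.ofReal (1 - θ))⁻¹ ^ finrank ℝ V * (∑ i ∈ Finset.range (n + 2 + 1), v i) *
        (ENNReal.ofReal ((finrank ℝ V + 1) * (2 * θ ^ n)) * μ D) := by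
  have h1θ : 0 < 1 - θ := by linarith
  have hθ0 : 0 < θ := by linarith
  have hpos : 0 < θ ^ n := by positivity
  have hgauge : Measurable (gauge D) :=
    (continuous_gauge hD (Filter.mem_of_superset (ball_mem_nhds 0 hρ) hin)).measurable
  have hnhd (y : V) (hy : 1 - θ ^ n ≤ gauge D y ∧ gauge D y ≤ 1 - θ ^ (n + 1)) :
      ball y ((1 - θ) * (θ ^ (n + 2) * s)) ⊆
        {u | 1 - 2 * θ ^ n ≤ gauge D u ∧ gauge D u ≤ 1 - θ ^ (n + 2)} := by
    intro u hu
    have hdist : dist u y / ρ ≤ (1 - θ) * θ ^ (n + 2) := by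
      rw [div_le_iff₀ hρ, mul_assoc]
      exact (mem_ball.1 hu).le.trans (by gcongr)
    have h₁ := gauge_le_gauge_add_dist_div hD hρ hin u y
    have h₂ := gauge_le_gauge_add_dist_div hD hρ hin y u
    rw [dist_comm y u] at h₂
    simp only [pow_succ] at hdist hy ⊢
    constructor <;> nlinarith [mul_pos hpos hθ0, mul_pos hpos h1θ, mul_pos (mul_pos hpos hθ0) h1θ]
  have hcollar : {u | 1 - 2 * θ ^ n ≤ gauge D u ∧ gauge D u ≤ 1 - θ ^ (n + 2)} ⊆
      {u ∈ D | 1 - 2 * θ ^ n ≤ gauge D u} := fun u hu =>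
    ⟨ball_subset_of_gauge_le hD hρ hin hu.2 (mem_ball_self (by positivity)), hu.1⟩
  refine (setLIntegral_le_of_ball_average_le (hg.sub_const _).enorm
    ((measurableSet_le measurable_const hgauge).inter (measurableSet_le hgauge measurable_const))
    ((measurableSet_le measurable_const hgauge).inter (measurableSet_le hgauge measurable_const))
    (by positivity) hnhd fun p hp =>
      setLIntegral_ball_enorm_sub_center_le hg hρ hin hout hθ hθ1 hs hRs hc hp.2).trans ?_
  gcongr
  exact (measure_mono hcollar).trans (addHaar_setOf_le_gauge_le hDo hD (hin (mem_ball_self hρ))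
    (measure_ne_top_of_subset hout measure_ball_lt_top.ne) (by positivity))

theorem meanOscillationLE_of_convex_of_ball_zero (hDo : IsOpen D) (hD : Convex ℝ D)
    (hg : Measurable g) (hρ : 0 < ρ) (hin : ball 0 ρ ⊆ D) (hout : D ⊆ ball 0 R)
    (hθ : 1 / 2 ≤ θ) (hθ1 : θ < 1) (hs : 0 < s) (hsρ : s ≤ ρ) (hRs : 2 * (1 - θ) * R ≤ s)
    (hv : ∀ n y, ball y (θ ^ n * ρ) ⊆ D → MeanOscillationLE μ g (ball y (θ ^ n * s)) (v n)) :
    MeanOscillationLE μ g D (24 * (finrank ℝ V + 1) *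
      (ENNReal.ofReal (1 - θ))⁻¹ ^ (finrank ℝ V + 1) * ∑' n, ENNReal.ofReal θ ^ n * v n) := by
  have hθ0 : 0 < θ := by linarith
  choose! c hc using fun n y (h : gauge D y ≤ 1 - θ ^ n) =>
    hv n y (ball_subset_of_gauge_le hD hρ hin h)
  have hcover : D ⊆ ⋃ n : ℕ, {u | 1 - θ ^ n ≤ gauge D u ∧ gauge D u ≤ 1 - θ ^ (n + 1)} :=
    fun u hu => mem_iUnion.2
      (exists_pow_shell_of_gauge_lt_one hθ0 hθ1 (gauge_lt_one_of_mem_of_isOpen hDo hu))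
  set κ := (ENNReal.ofReal (1 - θ))⁻¹
  have hvol (n : ℕ) : ENNReal.ofReal ((finrank ℝ V + 1) * (2 * θ ^ n)) =
      (finrank ℝ V + 1) * (2 * ENNReal.ofReal θ ^ n) := by
    rw [ENNReal.ofReal_mul (by positivity), ENNReal.ofReal_mul two_pos.le,
      ENNReal.ofReal_add (by positivity) zero_le_one, ENNReal.ofReal_pow hθ0.le]
    simp
  refine ⟨c 0 0, ?_⟩
  calc ∫⁻ u in D, ‖g u - c 0 0‖ₑ ∂μ
      ≤ ∑' n : ℕ, ∫⁻ u in {u | 1 - θ ^ n ≤ gauge D u ∧ gauge D u ≤ 1 - θ ^ (n + 1)},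
          ‖g u - c 0 0‖ₑ ∂μ := (lintegral_mono_set hcover).trans (lintegral_iUnion_le _ _)
    _ ≤ ∑' n, 3 * κ ^ finrank ℝ V * (∑ i ∈ Finset.range (n + 2 + 1), v i) *
          ((finrank ℝ V + 1) * (2 * ENNReal.ofReal θ ^ n) * μ D) :=
        ENNReal.tsum_le_tsum fun n => hvol n ▸ setLIntegral_shell_enorm_sub_center_le hDo hD hg hρ
          hin hout hθ hθ1 hs hsρ hRs hc n
    _ = 6 * (finrank ℝ V + 1) * κ ^ finrank ℝ V * μ D *
          ∑' n, ENNReal.ofReal θ ^ n * ∑ i ∈ Finset.range (n + 2 + 1), v i := by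
        rw [← ENNReal.tsum_mul_left]
        exact tsum_congr fun n => by ring
    _ ≤ 6 * (finrank ℝ V + 1) * κ ^ finrank ℝ V * μ D *
          (4 * (κ * ∑' n, ENNReal.ofReal θ ^ n * v n)) := by
        gcongr
        refine (tsum_pow_mul_sum_range_add_three_le ?_ v).trans_eq ?_
        · rw [← ENNReal.ofReal_ofNat 2, ← ENNReal.ofReal_inv_of_pos two_pos]
          exact ENNReal.ofReal_le_ofReal (by linarith)
        · rw [← ENNReal.ofReal_one, ← ENNReal.ofReal_sub 1 hθ0.le]
    _ = 24 * (finrank ℝ V + 1) * κ ^ (finrank ℝ V + 1) * (∑' n, ENNReal.ofReal θ ^ n * v n) *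
          μ D := by ring

theorem meanOscillationLE_of_convex (hDo : IsOpen D) (hD : Convex ℝ D) (hg : Measurable g)
    (hρ : 0 < ρ) {x₀ : V} (hin : ball x₀ ρ ⊆ D) (hout : D ⊆ ball x₀ R)
    (hθ : 1 / 2 ≤ θ) (hθ1 : θ < 1) (hs : 0 < s) (hsρ : s ≤ ρ) (hRs : 2 * (1 - θ) * R ≤ s)
    (hv : ∀ n y, ball y (θ ^ n * ρ) ⊆ D → MeanOscillationLE μ g (ball y (θ ^ n * s)) (v n)) :
    MeanOscillationLE μ g D (24 * (finrank ℝ V + 1) *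
      (ENNReal.ofReal (1 - θ))⁻¹ ^ (finrank ℝ V + 1) * ∑' n, ENNReal.ofReal θ ^ n * v n) := by
  have hiff (t : Set V) (a : ℝ≥0∞) : MeanOscillationLE μ (g ∘ (· + x₀)) ((· + x₀) ⁻¹' t) a ↔
      MeanOscillationLE μ g t a :=
    meanOscillationLE_comp_preimage_iff (measurePreserving_add_right μ x₀)
      (measurableEmbedding_addRight x₀)
  have hball (y : V) (r : ℝ) : (· + x₀) ⁻¹' ball (y + x₀) r = ball y r := by
    rw [preimage_add_right_ball, add_sub_cancel_right]
  have hball0 (r : ℝ) : (· + x₀) ⁻¹' ball x₀ r = ball 0 r := by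
    rw [preimage_add_right_ball, sub_self]
  refine (hiff D _).1 (meanOscillationLE_of_convex_of_ball_zero
    (hDo.preimage (continuous_add_const x₀)) (hD.translate_preimage_left x₀)
    (hg.comp (measurable_add_const x₀)) hρ (hball0 ρ ▸ preimage_mono hin)
    (hball0 R ▸ preimage_mono hout) hθ hθ1 hs hsρ hRs fun n y hy => ?_)
  rw [← hball, hiff]
  refine hv n (y + x₀) ?_
  rw [← hball] at hy
  exact (Equiv.addRight x₀).surjective.preimage_subset_preimage_iff.1 hy

end ConvexOscillation

section Dini

variable {φ : ℝ → ℝ≥0∞} {a θ T : ℝ}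

theorem tsum_pow_mul_setLAverage_Ioc_le (ha : 0 < a) (hθ0 : 0 < θ) (hθ1 : θ < 1)
    (φ : ℝ → ℝ≥0∞) :
    ∑' n : ℕ, ENNReal.ofReal θ ^ n * ⨍⁻ σ in Ioc (a * θ ^ (n + 1)) (a * θ ^ n), φ σ ∂volume ≤
      (ENNReal.ofReal (1 - θ))⁻¹ * (ENNReal.ofReal a⁻¹ * ∫⁻ σ in Ioc 0 a, φ σ) := by
  have hterm (n : ℕ) :
      ENNReal.ofReal θ ^ n * ⨍⁻ σ in Ioc (a * θ ^ (n + 1)) (a * θ ^ n), φ σ ∂volume =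
        (ENNReal.ofReal (1 - θ))⁻¹ *
          (ENNReal.ofReal a⁻¹ * ∫⁻ σ in Ioc (a * θ ^ (n + 1)) (a * θ ^ n), φ σ) := by
    have hfactor : θ ^ n * (a * θ ^ n - a * θ ^ (n + 1))⁻¹ = (1 - θ)⁻¹ * a⁻¹ := by
      rw [show a * θ ^ n - a * θ ^ (n + 1) = θ ^ n * ((1 - θ) * a) by ring, mul_inv,
        mul_inv_cancel_left₀ (by positivity), mul_inv]
    have hpos : 0 < a * θ ^ n - a * θ ^ (n + 1) := by
      rw [pow_succ, ← mul_assoc]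
      exact sub_pos.2 (mul_lt_of_lt_one_right (by positivity) hθ1)
    rw [setLAverage_eq, Real.volume_Ioc, ENNReal.div_eq_inv_mul, ← mul_assoc, ← mul_assoc,
      ← ENNReal.ofReal_pow hθ0.le, ← ENNReal.ofReal_inv_of_pos hpos,
      ← ENNReal.ofReal_mul (by positivity), hfactor,
      ENNReal.ofReal_mul (inv_nonneg.2 (sub_nonneg.2 hθ1.le)),
      ENNReal.ofReal_inv_of_pos (sub_pos.2 hθ1)]
  have hanti : Antitone fun n : ℕ => a * θ ^ n := fun m n hmn =>
    mul_le_mul_of_nonneg_left (pow_le_pow_of_le_one hθ0.le hθ1.le hmn) ha.le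
  simp only [hterm]
  rw [ENNReal.tsum_mul_left, ENNReal.tsum_mul_left]
  gcongr
  refine (lintegral_iUnion (fun _ => measurableSet_Ioc)
    hanti.pairwise_disjoint_on_Ioc_succ φ).symm.trans_le (lintegral_mono_set ?_)
  refine iUnion_subset fun n => Ioc_subset_Ioc (by positivity) ?_
  exact mul_le_of_le_one_right ha.le (pow_le_one₀ hθ0.le hθ1.le)

theorem lintegral_Ici_rpow_neg_two {σ : ℝ} (hσ : 0 < σ) :
    ∫⁻ r in Ici σ, ENNReal.ofReal (r ^ (-2 : ℝ)) = ENNReal.ofReal σ⁻¹ := by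
  rw [setLIntegral_congr Ioi_ae_eq_Ici.symm, ← ofReal_integral_eq_lintegral_ofReal
    (integrableOn_Ioi_rpow_of_lt (by norm_num) hσ)
    ((ae_restrict_mem measurableSet_Ioi).mono fun r hr => Real.rpow_nonneg (hσ.trans hr).le _),
    integral_Ioi_rpow_of_lt (by norm_num) hσ, ← Real.rpow_neg_one]
  norm_num

theorem lintegral_rpow_neg_two_mul_lintegral_Ioc_le
    (hφ : AEMeasurable φ (volume.restrict (Ioc 0 T))) :
    ∫⁻ r in Ioc 0 T, ENNReal.ofReal (r ^ (-2 : ℝ)) * ∫⁻ σ in Ioc 0 r, φ σ ≤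
      ∫⁻ σ in Ioc 0 T, ENNReal.ofReal σ⁻¹ * φ σ := by
  have hU : MeasurableSet {p : ℝ × ℝ | p.2 ≤ p.1} := measurableSet_le measurable_snd measurable_fst
  set G : ℝ × ℝ → ℝ≥0∞ :=
    {p : ℝ × ℝ | p.2 ≤ p.1}.indicator fun p => ENNReal.ofReal (p.1 ^ (-2 : ℝ)) * φ p.2
  have hIic (r σ : ℝ) :
      G (r, σ) = (Iic r).indicator (fun σ => ENNReal.ofReal (r ^ (-2 : ℝ)) * φ σ) σ := by
    simp only [G, indicator, mem_ofPred_eq, mem_Iic]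
  have hIci (r σ : ℝ) :
      G (r, σ) = (Ici σ).indicator (fun r => ENNReal.ofReal (r ^ (-2 : ℝ)) * φ σ) r := by
    simp only [G, indicator, mem_ofPred_eq, mem_Ici]
  calc ∫⁻ r in Ioc 0 T, ENNReal.ofReal (r ^ (-2 : ℝ)) * ∫⁻ σ in Ioc 0 r, φ σ
      = ∫⁻ r in Ioc 0 T, ∫⁻ σ in Ioc 0 T, G (r, σ) := by
        refine setLIntegral_congr_fun measurableSet_Ioc fun r hr => ?_
        simp only [hIic]
        rw [lintegral_indicator measurableSet_Iic, Measure.restrict_restrict measurableSet_Iic,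
          inter_comm, Ioc_inter_Iic, min_eq_right hr.2,
          lintegral_const_mul' _ _ ENNReal.ofReal_ne_top]
    _ = ∫⁻ σ in Ioc 0 T, ∫⁻ r in Ioc 0 T, G (r, σ) :=
        lintegral_lintegral_swap <| AEMeasurable.indicator
          (AEMeasurable.mul (by fun_prop) hφ.comp_snd) hU
    _ ≤ ∫⁻ σ in Ioc 0 T, ENNReal.ofReal σ⁻¹ * φ σ := by
        refine setLIntegral_mono' measurableSet_Ioc fun σ hσ => ?_
        simp only [hIci]
        refine (setLIntegral_le_lintegral _ _).trans_eq ?_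
        rw [lintegral_indicator measurableSet_Ici, lintegral_mul_const _ (by fun_prop),
          lintegral_Ici_rpow_neg_two hσ.1]

theorem integrableOn_toReal_mul_lintegral_Ioc_div
    (hφ : AEMeasurable φ (volume.restrict (Ioc 0 T)))
    (hDini : ∫⁻ σ in Ioc 0 T, ENNReal.ofReal σ⁻¹ * φ σ ≠ ∞) {C : ℝ≥0∞} (hC : C ≠ ∞) :
    IntegrableOn (fun r => (C * (ENNReal.ofReal r⁻¹ * ∫⁻ σ in Ioc 0 r, φ σ)).toReal / r)
      (Ioc 0 T) := by
  have hmono : Monotone fun r => ∫⁻ σ in Ioc 0 r, φ σ := fun _ _ hab =>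
    lintegral_mono_set (Ioc_subset_Ioc_right hab)
  have hmeas : Measurable fun r => C * (ENNReal.ofReal (r ^ (-2 : ℝ)) * ∫⁻ σ in Ioc 0 r, φ σ) :=
    ((by fun_prop : Measurable fun r => ENNReal.ofReal (r ^ (-2 : ℝ))).mul
      hmono.measurable).const_mul C
  have hint : IntegrableOn
      (fun r => (C * (ENNReal.ofReal (r ^ (-2 : ℝ)) * ∫⁻ σ in Ioc 0 r, φ σ)).toReal) (Ioc 0 T) := by
    refine integrable_toReal_of_lintegral_ne_top hmeas.aemeasurable ?_
    rw [lintegral_const_mul' _ _ hC]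
    exact ENNReal.mul_ne_top hC (ne_top_of_le_ne_top hDini
      (lintegral_rpow_neg_two_mul_lintegral_Ioc_le hφ))
  refine hint.congr_fun (fun r hr => ?_) measurableSet_Ioc
  simp only [ENNReal.toReal_mul, ENNReal.toReal_ofReal (inv_nonneg.2 hr.1.le),
    ENNReal.toReal_ofReal (Real.rpow_nonneg hr.1.le _)]
  rw [Real.rpow_neg hr.1.le, Real.rpow_two]
  ring

theorem lintegral_Ioc_le_mul_lintegral_inv_mul (φ : ℝ → ℝ≥0∞) :
    ∫⁻ σ in Ioc 0 T, φ σ ≤ ENNReal.ofReal T * ∫⁻ σ in Ioc 0 T, ENNReal.ofReal σ⁻¹ * φ σ := by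
  rw [← lintegral_const_mul' _ _ ENNReal.ofReal_ne_top]
  refine setLIntegral_mono' measurableSet_Ioc fun σ hσ => ?_
  rw [← mul_assoc, ← ENNReal.ofReal_mul (hσ.1.le.trans hσ.2), ← div_eq_mul_inv]
  exact le_mul_of_one_le_left' (ENNReal.one_le_ofReal.2 ((one_le_div hσ.1).2 hσ.2))

variable {w : ℝ → ℝ}

theorem aemeasurable_of_integrableOn_div (hw : IntegrableOn (fun r => w r / r) (Ioc 0 T)) :
    AEMeasurable w (volume.restrict (Ioc 0 T)) := by
  refine (aemeasurable_id.mul hw.aestronglyMeasurable.aemeasurable).congr ?_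
  filter_upwards [ae_restrict_mem measurableSet_Ioc] with r hr
  exact mul_div_cancel₀ _ hr.1.ne'

theorem lintegral_inv_mul_ofReal_ne_top (hw : IntegrableOn (fun r => w r / r) (Ioc 0 T)) :
    ∫⁻ σ in Ioc 0 T, ENNReal.ofReal σ⁻¹ * ENNReal.ofReal (w σ) ≠ ∞ := by
  refine ne_top_of_le_ne_top hw.2.ne (setLIntegral_mono' measurableSet_Ioc fun σ hσ => ?_)
  rw [← ENNReal.ofReal_mul (inv_nonneg.2 hσ.1.le), ← div_eq_inv_mul, ← ofReal_norm]
  exact ENNReal.ofReal_le_ofReal (le_abs_self _)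

theorem diniMeanOscillationOn_of_meanOscillationLE {d : ℕ} {g : E d → ℝ} (hg : Measurable g)
    {Ω : Set (E d)} (hΩ : IsOpen Ω) (hw : IntegrableOn (fun r => w r / r) (Ioc 0 T)) (hT : 0 < T)
    {C : ℝ≥0∞} (hC : C ≠ ∞)
    (h : ∀ r ∈ Ioc 0 T, ∀ x ∈ Ω, IntegrableOn g (Ω ∩ ball x r) →
      MeanOscillationLE volume g (Ω ∩ ball x r)
        (C * (ENNReal.ofReal r⁻¹ * ∫⁻ σ in Ioc 0 r, ENNReal.ofReal (w σ)))) :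
    DiniMeanOscillationOn g Ω := by
  have hDini := lintegral_inv_mul_ofReal_ne_top hw
  refine ⟨T, hT, fun r => (2 * C * (ENNReal.ofReal r⁻¹ *
    ∫⁻ σ in Ioc 0 r, ENNReal.ofReal (w σ))).toReal, fun _ => ENNReal.toReal_nonneg,
    integrableOn_toReal_mul_lintegral_Ioc_div (aemeasurable_of_integrableOn_div hw).ennreal_ofReal
      hDini (ENNReal.mul_ne_top ENNReal.ofNat_ne_top hC), fun r hr x hx => ?_⟩
  by_cases hint : IntegrableOn g (Ω ∩ ball x r)
  · have hpos : volume (Ω ∩ ball x r) ≠ 0 :=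
      ((hΩ.inter isOpen_ball).measure_pos _ ⟨x, hx, mem_ball_self hr.1⟩).ne'
    have hfin : volume (Ω ∩ ball x r) ≠ ∞ :=
      measure_ne_top_of_subset inter_subset_right measure_ball_lt_top.ne
    have hF : ∫⁻ σ in Ioc 0 r, ENNReal.ofReal (w σ) ≠ ∞ :=
      ne_top_of_le_ne_top (ENNReal.mul_ne_top ENNReal.ofReal_ne_top hDini)
        ((lintegral_mono_set (Ioc_subset_Ioc_right hr.2)).trans
          (lintegral_Ioc_le_mul_lintegral_inv_mul _))
    simp only [mul_assoc]
    exact (h r hr x hx hint).setAvg_abs_sub_setAvg_le hint hpos hfin (by finiteness)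
  · rw [setAvg_abs_sub_setAvg_eq_zero_of_not_integrableOn hg.aestronglyMeasurable hint]
    exact ENNReal.toReal_nonneg

end Dini

section ConvexAverage

variable {V : Type*} [NormedAddCommGroup V] [NormedSpace ℝ V] [FiniteDimensional ℝ V]
  [MeasurableSpace V] [BorelSpace V] {μ : Measure V} [μ.IsAddHaarMeasure] {g : V → ℝ}
  {D : Set V} {ρ : ℝ} {x₀ : V} {φ : ℝ → ℝ≥0∞} {A : ℝ≥0∞}

theorem meanOscillationLE_of_convex_of_geometric_setLAverage (hDo : IsOpen D) (hD : Convex ℝ D)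
    (hg : Measurable g) (hρ : 0 < ρ) (hin : ball x₀ ρ ⊆ D) {R : ℝ}
    (hout : D ⊆ ball x₀ R) {θ s a : ℝ} (hθ : 1 / 2 ≤ θ) (hθ1 : θ < 1) (hs : 0 < s) (hsρ : s ≤ ρ)
    (hRs : 2 * (1 - θ) * R ≤ s) (ha : 0 < a)
    (hv : ∀ n y, ball y (θ ^ n * ρ) ⊆ D → MeanOscillationLE μ g (ball y (θ ^ n * s))
      (A * ⨍⁻ σ in Ioc (a * θ ^ (n + 1)) (a * θ ^ n), φ σ ∂volume)) :
    MeanOscillationLE μ g D (24 * (finrank ℝ V + 1) *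
      (ENNReal.ofReal (1 - θ))⁻¹ ^ (finrank ℝ V + 2) * A *
        (ENNReal.ofReal a⁻¹ * ∫⁻ σ in Ioc 0 a, φ σ)) := by
  refine (meanOscillationLE_of_convex hDo hD hg hρ hin hout hθ hθ1 hs hsρ hRs hv).mono ?_
  simp only [mul_left_comm (ENNReal.ofReal θ ^ _)]
  rw [ENNReal.tsum_mul_left]
  set κ := (ENNReal.ofReal (1 - θ))⁻¹
  calc 24 * (finrank ℝ V + 1) * κ ^ (finrank ℝ V + 1) * (A * ∑' n : ℕ,
        ENNReal.ofReal θ ^ n * ⨍⁻ σ in Ioc (a * θ ^ (n + 1)) (a * θ ^ n), φ σ ∂volume)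
      ≤ 24 * (finrank ℝ V + 1) * κ ^ (finrank ℝ V + 1) *
          (A * (κ * (ENNReal.ofReal a⁻¹ * ∫⁻ σ in Ioc 0 a, φ σ))) := by
        gcongr
        exact tsum_pow_mul_setLAverage_Ioc_le ha (by linarith) hθ1 φ
    _ = 24 * (finrank ℝ V + 1) * κ ^ (finrank ℝ V + 2) * A *
          (ENNReal.ofReal a⁻¹ * ∫⁻ σ in Ioc 0 a, φ σ) := by ring

theorem meanOscillationLE_of_convex_of_setLAverage (hDo : IsOpen D) (hD : Convex ℝ D)
    (hg : Measurable g) (hρ : 0 < ρ) (hin : ball x₀ ρ ⊆ D) {M : ℝ≥0} (hM : 1 ≤ M)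
    (hout : D ⊆ ball x₀ (M * ρ)) {K : ℝ≥0} (hK : 1 ≤ K)
    (hlocal : ∀ a b y, b ∈ Ioc 0 ρ → b / 2 ≤ a → a < b → ball y (K * b) ⊆ D →
      MeanOscillationLE μ g (ball y (b / (2 * K))) (A * ⨍⁻ σ in Ioc a b, φ σ ∂volume)) :
    MeanOscillationLE μ g D (24 * (finrank ℝ V + 1) * (4 * K ^ 2 * M) ^ (finrank ℝ V + 2) * A *
      (K * ENNReal.ofReal ρ⁻¹ * ∫⁻ σ in Ioc 0 ρ, φ σ)) := by
  have hKr : (1 : ℝ) ≤ K := hK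
  have hMr : (1 : ℝ) ≤ M := hM
  set N : ℝ := 4 * K ^ 2 * M with hN
  have hN0 : 0 < N := by positivity
  obtain ⟨θ, hθ⟩ : ∃ θ : ℝ, 1 - θ = N⁻¹ := ⟨1 - N⁻¹, sub_sub_cancel _ _⟩
  have hN2 : N⁻¹ ≤ 2⁻¹ := inv_anti₀ two_pos (by nlinarith [hKr, hMr])
  have hθ1 : θ < 1 := by linarith [inv_pos.2 hN0]
  have hθ0 : 0 < θ := by linarith
  obtain ⟨a, ha⟩ : ∃ a : ℝ, K * a = ρ := ⟨ρ / K, mul_div_cancel₀ _ (by positivity)⟩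
  have ha0 : 0 < a := pos_of_mul_pos_right (ha ▸ hρ) K.2
  have haρ : a ≤ ρ := by nlinarith
  have hv (n : ℕ) (y : V) (hy : ball y (θ ^ n * ρ) ⊆ D) :
      MeanOscillationLE μ g (ball y (θ ^ n * (a / (2 * K))))
        (A * ⨍⁻ σ in Ioc (a * θ ^ (n + 1)) (a * θ ^ n), φ σ ∂volume) := by
    have hpos : 0 < a * θ ^ n := by positivity
    have hle : a * θ ^ n ≤ a := mul_le_of_le_one_right ha0.le (pow_le_one₀ hθ0.le hθ1.le)
    rw [← ha, mul_left_comm, mul_comm _ a] at hy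
    rw [← mul_div_assoc, mul_comm _ a]
    exact hlocal _ _ y ⟨hpos, hle.trans haρ⟩ (by rw [pow_succ]; nlinarith)
      (by rw [pow_succ]; nlinarith) hy
  have hκ : (ENNReal.ofReal (1 - θ))⁻¹ = 4 * K ^ 2 * M := by
    rw [hθ, ENNReal.ofReal_inv_of_pos hN0, inv_inv, hN]
    exact ENNReal.ofReal_coe_nnreal (p := 4 * K ^ 2 * M)
  have ha_inv : ENNReal.ofReal a⁻¹ = K * ENNReal.ofReal ρ⁻¹ := by
    rw [← ENNReal.ofReal_coe_nnreal (p := K), ← ENNReal.ofReal_mul K.coe_nonneg, ← ha]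
    field_simp
  refine (meanOscillationLE_of_convex_of_geometric_setLAverage hDo hD hg hρ hin hout
    (by linarith) hθ1 (by positivity) ((div_le_self ha0.le (by linarith)).trans haρ)
    (le_of_eq ?_) ha0 hv).mono ?_
  · rw [hθ, hN, ← ha]
    field_simp
    norm_num
  · rw [hκ, ha_inv]
    gcongr

end ConvexAverage

section Composition

theorem exists_ball_subset_inter_ball {V : Type*} [NormedAddCommGroup V] [NormedSpace ℝ V]
    {Ω : Set V} {z x : V} {R ε r : ℝ} (hΩ : Convex ℝ Ω) (hin : ball z (ε * R) ⊆ Ω)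
    (hout : Ω ⊆ ball z R) (hε : ε ≤ 1) (hx : x ∈ Ω) (hr : 0 < r) (hrR : r ≤ R) :
    ∃ x₀, ball x₀ (ε * r / 2) ⊆ Ω ∩ ball x r ∧ Ω ∩ ball x r ⊆ ball x₀ (2 * r) := by
  have hR : 0 < R := hr.trans_le hrR
  set τ := r / (2 * R)
  have hτ : 0 < τ := by positivity
  have hτR : τ * R = r / 2 := by simp only [τ]; field_simp
  have hτ1 : τ ≤ 1 := (div_le_one (by positivity)).2 (by linarith)
  set x₀ := AffineMap.lineMap x z τ with hx₀
  have hdist : dist x₀ x ≤ r / 2 := by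
    rw [hx₀, dist_lineMap_left, Real.norm_of_nonneg hτ.le, ← hτR]
    exact mul_le_mul_of_nonneg_left (hout hx).le hτ.le
  refine ⟨x₀, subset_inter (fun u hu => ?_) (ball_subset_ball' (by nlinarith)),
    inter_subset_right.trans (ball_subset_ball' (by rw [dist_comm]; linarith))⟩
  have hv : z + τ⁻¹ • (u - x₀) ∈ Ω := by
    refine hin ?_
    rw [mem_ball_iff_norm, add_sub_cancel_left, norm_smul, norm_inv, Real.norm_of_nonneg hτ.le,
      inv_mul_lt_iff₀ hτ, ← dist_eq_norm]
    exact (mem_ball.1 hu).trans_eq (by linear_combination -ε * hτR)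
  have hu : u = AffineMap.lineMap x (z + τ⁻¹ • (u - x₀)) τ := by
    rw [AffineMap.lineMap_apply_module, smul_add, smul_inv_smul₀ hτ.ne', hx₀,
      AffineMap.lineMap_apply_module]
    abel
  rw [hu]
  exact hΩ.lineMap_mem hx hv ⟨hτ.le, hτ1⟩

variable {d : ℕ} {f : E d → ℝ} {Φ : E d → E d} {K L : ℝ≥0} {Ω D : Set (E d)} {x₀ y : E d}
  {s σ ρ : ℝ} {w : ℝ → ℝ}

theorem meanOscillationLE_comp_ball (hf : Measurable f) (hK : LipschitzWith K Φ)
    (hL : AntilipschitzWith L Φ) (hsurj : Function.Surjective Φ) (hK0 : 0 < K) (hL0 : 0 < L)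
    (hs : 0 < s)
    (hsσ : K * s ≤ σ) (hσs : σ ≤ 2 * K * s) (hmaps : MapsTo Φ (ball y (L * σ)) Ω)
    (hint : IntegrableOn (f ∘ Φ) (ball y (L * σ))) {a : ℝ}
    (ha : setAvg (fun u => |f u - setAvg f (Ω ∩ ball (Φ y) σ)|) (Ω ∩ ball (Φ y) σ) ≤ a) :
    MeanOscillationLE volume (f ∘ Φ) (ball y s) (L ^ d * (2 * K) ^ d * ENNReal.ofReal a) := by
  have hKr : (0 : ℝ) < K := hK0
  have hσ : 0 < σ := (by positivity : 0 < K * s).trans_le hsσ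
  have hpre : Φ ⁻¹' ball (Φ y) σ ⊆ ball y (L * σ) := fun u hu =>
    (hL.le_mul_dist u y).trans_lt (mul_lt_mul_of_pos_left hu hL0)
  have hsub : ball (Φ y) σ ⊆ Ω := by
    rw [← image_preimage_eq (ball (Φ y) σ) hsurj]
    exact (hmaps.mono_left hpre).image_subset
  rw [inter_eq_right.2 hsub] at ha
  have hosc := meanOscillationLE_of_setAvg_abs_sub_le
    (integrableOn_of_integrableOn_comp hK hsurj hf measurableSet_ball (hint.mono_set hpre))
    (measure_ball_pos _ _ hσ).ne' measure_ball_lt_top.ne ha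
  have hmap := addHaar_map_le_of_antilipschitzWith (μ := (volume : Measure (E d))) hL
    hK.continuous.measurable
  rw [finrank_euclideanSpace_fin] at hmap
  refine hosc.comp_of_map_le hK.continuous.measurable hmap hf measurableSet_ball
    ((hK.mapsTo_ball hK0.ne' y s).mono_right (ball_subset_ball hsσ)) ?_
  calc volume (ball (Φ y) σ) ≤ volume (ball (Φ y) (2 * K * s)) :=
        measure_mono (ball_subset_ball hσs)
    _ = (2 * K) ^ d * volume (ball y s) := by
        rw [addHaar_ball_mul_eq (Φ y) y (by positivity), finrank_euclideanSpace_fin,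
          ENNReal.ofReal_mul two_pos.le, ENNReal.ofReal_ofNat, ENNReal.ofReal_coe_nnreal]

theorem meanOscillationLE_comp_ball_setLAverage (hf : Measurable f) (hK : LipschitzWith K Φ)
    (hL : AntilipschitzWith L Φ) (hsurj : Function.Surjective Φ) (hK0 : 0 < K) (hL0 : 0 < L)
    {a b : ℝ} (hb : 0 < b) (hba : b / 2 ≤ a) (hab : a < b) (hmaps : MapsTo Φ (ball y (L * b)) Ω)
    (hint : IntegrableOn (f ∘ Φ) (ball y (L * b))) (hw : AEMeasurable w (volume.restrict (Ioc a b)))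
    (hosc : ∀ σ ∈ Ioc a b,
      setAvg (fun u => |f u - setAvg f (Ω ∩ ball (Φ y) σ)|) (Ω ∩ ball (Φ y) σ) ≤ w σ) :
    MeanOscillationLE volume (f ∘ Φ) (ball y (b / (2 * K)))
      (L ^ d * (2 * K) ^ d * ⨍⁻ σ in Ioc a b, ENNReal.ofReal (w σ) ∂volume) := by
  obtain ⟨σ, hσ, hσw⟩ := exists_le_setLAverage (by simpa using hab) (by simp) hw.ennreal_ofReal
  have h2K : 0 < 2 * (K : ℝ) := mul_pos two_pos hK0
  have hradius : 2 * K * (b / (2 * K)) = b := mul_div_cancel₀ _ h2K.ne'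
  have hball : ball y (L * σ) ⊆ ball y (L * b) := ball_subset_ball (by gcongr; exact hσ.2)
  exact (meanOscillationLE_comp_ball hf hK hL hsurj hK0 hL0 (by positivity) (by linarith [hσ.1])
    (hσ.2.trans hradius.ge) (hmaps.mono_left hball) (hint.mono_set hball) (hosc σ hσ)).mono
    (by gcongr)

theorem meanOscillationLE_comp_of_convex (hf : Measurable f) (hK : LipschitzWith K Φ)
    (hL : AntilipschitzWith K Φ) (hsurj : Function.Surjective Φ) (hK1 : 1 ≤ K) (hDo : IsOpen D)
    (hD : Convex ℝ D) (hρ : 0 < ρ) (hin : ball x₀ ρ ⊆ D) {M : ℝ≥0} (hM : 1 ≤ M)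
    (hout : D ⊆ ball x₀ (M * ρ)) (hmaps : MapsTo Φ D Ω) (hint : IntegrableOn (f ∘ Φ) D)
    (hw : AEMeasurable w (volume.restrict (Ioc 0 ρ)))
    (hosc : ∀ σ ∈ Ioc 0 ρ, ∀ x ∈ Ω,
      setAvg (fun u => |f u - setAvg f (Ω ∩ ball x σ)|) (Ω ∩ ball x σ) ≤ w σ) :
    MeanOscillationLE volume (f ∘ Φ) D (24 * (d + 1) * (4 * K ^ 2 * M) ^ (d + 2) *
      (K ^ d * (2 * K) ^ d) *
        (K * ENNReal.ofReal ρ⁻¹ * ∫⁻ σ in Ioc 0 ρ, ENNReal.ofReal (w σ))) := by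
  have hK0 : 0 < K := zero_lt_one.trans_le hK1
  have hlocal (a b : ℝ) (y : E d) (hb : b ∈ Ioc 0 ρ) (hba : b / 2 ≤ a) (hab : a < b)
      (hy : ball y (K * b) ⊆ D) : MeanOscillationLE volume (f ∘ Φ) (ball y (b / (2 * K)))
        (K ^ d * (2 * K) ^ d * ⨍⁻ σ in Ioc a b, ENNReal.ofReal (w σ) ∂volume) := by
    have hIoc : Ioc a b ⊆ Ioc 0 ρ := Ioc_subset_Ioc ((half_pos hb.1).le.trans hba) hb.2
    have hyD : y ∈ D := hy (mem_ball_self (mul_pos hK0 hb.1))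
    exact meanOscillationLE_comp_ball_setLAverage hf hK hL hsurj hK0 hK0 hb.1 hba hab
      (hmaps.mono_left hy) (hint.mono_set hy)
      (hw.mono_measure (Measure.restrict_mono hIoc le_rfl))
      fun σ hσ => hosc σ (hIoc hσ) (Φ y) (hmaps hyD)
  have h := meanOscillationLE_of_convex_of_setLAverage hDo hD (hf.comp hK.continuous.measurable)
    hρ hin hM hout hK1 hlocal
  rwa [finrank_euclideanSpace_fin] at h

theorem exists_ball_subset_subset_ball {X : Type*} [PseudoMetricSpace X] {Ω : Set X} {z : X}
    (hΩo : IsOpen Ω) (hΩb : Bornology.IsBounded Ω) (hz : z ∈ Ω) :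
    ∃ R > 0, ∃ ε : ℝ≥0, 0 < ε ∧ ε ≤ 1 ∧ ball z (ε * R) ⊆ Ω ∧ Ω ⊆ ball z R := by
  obtain ⟨δ, hδ, hin⟩ := isOpen_iff.1 hΩo z hz
  obtain ⟨R, hδR, hout⟩ := hΩb.subset_ball_lt δ z
  have hR : 0 < R := hδ.trans hδR
  lift δ to ℝ≥0 using hδ.le
  lift R to ℝ≥0 using hR.le
  refine ⟨R, hR, δ / R, div_pos hδ hR, div_le_one_of_le₀ hδR.le zero_le, ?_, hout⟩
  rwa [NNReal.coe_div, div_mul_cancel₀ _ hR.ne']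

theorem meanOscillationLE_comp_inter_ball (hf : Measurable f) (hK : LipschitzWith K Φ)
    (hL : AntilipschitzWith K Φ) (hsurj : Function.Surjective Φ) (hK1 : 1 ≤ K) (hDo : IsOpen D)
    (hD : Convex ℝ D) {z x : E d} {R r : ℝ} {ε : ℝ≥0} (hε0 : 0 < ε) (hε1 : ε ≤ 1)
    (hin : ball z (ε * R) ⊆ D) (hout : D ⊆ ball z R) (hx : x ∈ D) (hr : 0 < r) (hrR : r ≤ R)
    (hmaps : MapsTo Φ D Ω) (hint : IntegrableOn (f ∘ Φ) (D ∩ ball x r))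
    (hw : AEMeasurable w (volume.restrict (Ioc 0 r)))
    (hosc : ∀ σ ∈ Ioc 0 r, ∀ u ∈ Ω,
      setAvg (fun v => |f v - setAvg f (Ω ∩ ball u σ)|) (Ω ∩ ball u σ) ≤ w σ) :
    MeanOscillationLE volume (f ∘ Φ) (D ∩ ball x r) (24 * (d + 1) *
      (4 * K ^ 2 * (4 / ε : ℝ≥0)) ^ (d + 2) * (K ^ d * (2 * K) ^ d) *
        (K * ENNReal.ofReal (2 / ε)) *
          (ENNReal.ofReal r⁻¹ * ∫⁻ σ in Ioc 0 r, ENNReal.ofReal (w σ))) := by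
  obtain ⟨x₀, hin', hout'⟩ := exists_ball_subset_inter_ball hD hin hout hε1 hx hr hrR
  have hρr : ε * r / 2 ≤ r := by nlinarith [NNReal.coe_le_one.2 hε1]
  have hIoc : Ioc 0 (ε * r / 2) ⊆ Ioc 0 r := Ioc_subset_Ioc_right hρr
  have hM : 1 ≤ 4 / ε := (one_le_div hε0).2 (hε1.trans (by norm_num))
  have hradius : 2 * r = (4 / ε : ℝ≥0) * (ε * r / 2) := by
    push_cast
    field_simp
    norm_num
  refine (meanOscillationLE_comp_of_convex hf hK hL hsurj hK1 (hDo.inter isOpen_ball)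
    (hD.inter (convex_ball x r)) (by positivity) hin' hM (hout'.trans_eq (by rw [hradius]))
    (hmaps.mono_left inter_subset_left) hint
    (hw.mono_measure (Measure.restrict_mono hIoc le_rfl))
    fun σ hσ => hosc σ (hIoc hσ)).mono ?_
  have hinv : (ε * r / 2)⁻¹ = 2 / ε * r⁻¹ := by field_simp
  rw [hinv, ENNReal.ofReal_mul (by positivity)]
  simp only [mul_assoc]
  gcongr

end Composition

theorem dini_mean_oscillation_compose_diffeomorphism_general {d : ℕ} {f : E d → ℝ}
    (hf : Measurable f) {Ω Ω' : Set (E d)} (hDMO : DiniMeanOscillationOn f Ω) (hΩ'o : IsOpen Ω')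
    (hΩ'c : Convex ℝ Ω') (hΩ'b : Bornology.IsBounded Ω') {Φ : E d → E d} {K L : ℝ≥0}
    (hK : LipschitzWith K Φ) (hL : AntilipschitzWith L Φ) (hsurj : Function.Surjective Φ)
    (hmaps : MapsTo Φ Ω' Ω) : DiniMeanOscillationOn (f ∘ Φ) Ω' := by
  obtain ⟨t₀, ht₀, w, hw0, hw, hosc⟩ := hDMO
  obtain rfl | ⟨z, hz⟩ := Ω'.eq_empty_or_nonempty
  · exact ⟨t₀, ht₀, w, hw0, hw, fun _ _ _ hx => hx.elim⟩
  obtain ⟨R, hR, ε, hε0, hε1, hin, hout⟩ := exists_ball_subset_subset_ball hΩ'o hΩ'b hz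
  set k : ℝ≥0 := K + L + 1
  have hKk : LipschitzWith k Φ := hK.weaken (le_add_right le_self_add)
  have hLk : AntilipschitzWith k Φ := fun x y => (hL x y).trans
    (by gcongr; exact le_add_right le_add_self)
  refine diniMeanOscillationOn_of_meanOscillationLE (hf.comp hKk.continuous.measurable) hΩ'o
    (hw.mono_set (Ioc_subset_Ioc_right (min_le_left _ _))) (lt_min ht₀ hR)
    (C := 24 * (d + 1) * (4 * k ^ 2 * (4 / ε : ℝ≥0)) ^ (d + 2) * (k ^ d * (2 * k) ^ d) *
      (k * ENNReal.ofReal (2 / ε))) (by finiteness) fun r hr x hx hint => ?_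
  have hIoc : Ioc 0 r ⊆ Ioc 0 t₀ := Ioc_subset_Ioc_right (hr.2.trans (min_le_left _ _))
  exact meanOscillationLE_comp_inter_ball hf hKk hLk hsurj le_add_self hΩ'o hΩ'c hε0 hε1 hin hout
    hx hr.1 (hr.2.trans (min_le_right _ _)) hmaps hint
    ((aemeasurable_of_integrableOn_div hw).mono_measure (Measure.restrict_mono hIoc le_rfl))
    fun σ hσ => hosc σ (hIoc hσ)

/-- Lemma, part (i): the Dini mean oscillation condition is preserved by
composition with a C¹ bi-Lipschitz diffeomorphism with Hölder continuous partial
derivatives. -/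
theorem dini_mean_oscillation_compose_diffeomorphism
    {d : ℕ} (f : E d → ℝ) (hf : Measurable f) (z : E d) (R : ℝ) (hR : 0 < R)
    (hDMO : DiniMeanOscillationOn f (ball z (4 * R)))
    (Φ Ψ : E d → E d) (hΦ : ContDiff ℝ 1 Φ) (hΨ : ContDiff ℝ 1 Ψ)
    (hinv₁ : Function.LeftInverse Ψ Φ) (hinv₂ : Function.RightInverse Ψ Φ)
    (hHolder : ∀ i k : Fin d, ∃ (C α : NNReal), 0 < α ∧ α ≤ 1 ∧
      HolderWith C α (fun y => pd i (fun x => Φ x k) y))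
    (hbilip : ∀ x y : E d,
      2⁻¹ * ‖x - y‖ ≤ ‖Φ x - Φ y‖ ∧ ‖Φ x - Φ y‖ ≤ 2 * ‖x - y‖) :
    DiniMeanOscillationOn (f ∘ Φ) (ball (Ψ z) R) := by
  have hlip : LipschitzWith 2 Φ := LipschitzWith.of_dist_le_mul fun x y => by
    simpa [dist_eq_norm] using (hbilip x y).2
  have hanti : AntilipschitzWith 2 Φ := AntilipschitzWith.of_le_mul_dist fun x y => by
    rw [dist_eq_norm, dist_eq_norm, NNReal.coe_ofNat]
    linarith [(hbilip x y).1]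
  have hmaps : MapsTo Φ (ball (Ψ z) R) (ball z (4 * R)) := by
    have h := hlip.mapsTo_ball two_ne_zero (Ψ z) R
    rw [hinv₂ z, NNReal.coe_ofNat] at h
    exact h.mono_right (ball_subset_ball (by linarith))
  exact dini_mean_oscillation_compose_diffeomorphism_general hf hDMO isOpen_ball
    (convex_ball _ _) isBounded_ball hlip hanti hinv₂.surjective hmaps
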